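/- Let H be a random M×N matrix over F. (i) If T ≥ M and LOC(H,T) is rank symmetric, then H is uniform given rank. (ii) Conversely, if H is uniform given rank, then LOC(H,T) is rank symmetric for every positive integer T. -/

import Mathlib

open scoped Classical
open Finset Matrix Module

noncomputable section

/-- χ_m[r] = (q^m − 1)(q^m − q)⋯(q^m − q^{r−1}), with χ_m[0] = 1. -/
def chi (q m r : ℕ) : ℕ := ∏ i ∈ Finset.range r, (q ^ m - q ^ i)

/-- χ̃_m[r] = χ_m[r] · q^{−mr}, as a real number. -/
def chiTilde (q m r : ℕ) : ℝ := (chi q m r : ℝ) / (q : ℝ) ^ (m * r)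

/-- Gaussian binomial [m choose r]_q = χ_m[r]/χ_r[r], as a real number. -/
def gaussR (q m r : ℕ) : ℝ := (chi q m r : ℝ) / (chi q r r : ℝ)

variable {F : Type} [Field F] [Fintype F]

/-- Column space of a matrix. -/
def colSpace {m n : ℕ} (A : Matrix (Fin m) (Fin n) F) : Submodule F (Fin m → F) :=
  LinearMap.range A.mulVecLin

/-- Row space of a matrix. -/
def rowSpace {m n : ℕ} (A : Matrix (Fin m) (Fin n) F) : Submodule F (Fin n → F) :=
  colSpace Aᵀ

/-- Pr{XH = Y} for a random transfer matrix H with PMF `pH`, input `X`, output `Y`. -/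
def prXY {k M N : ℕ} (pH : Matrix (Fin M) (Fin N) F → ℝ)
    (X : Matrix (Fin k) (Fin M) F) (Y : Matrix (Fin k) (Fin N) F) : ℝ :=
  ∑ Hm : Matrix (Fin M) (Fin N) F, if X * Hm = Y then pH Hm else 0

/-- A PMF on a finite type: nonnegative and summing to one. -/
def IsPMF {Ω : Type*} [Fintype Ω] (p : Ω → ℝ) : Prop :=
  (∀ x, 0 ≤ p x) ∧ ∑ x, p x = 1

/-- α-type distribution: matrices with the same row space are equiprobable. -/
def IsAlphaType {T M : ℕ} (p : Matrix (Fin T) (Fin M) F → ℝ) : Prop :=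
  ∀ X X' : Matrix (Fin T) (Fin M) F, rowSpace X = rowSpace X' → p X = p X'

/-- Mutual information I(f;g) (base 2) between two functions of a finitely
distributed random element with PMF `p`; terms of zero probability vanish. -/
def mutualInfo {Ω A B : Type*} [Fintype Ω] (p : Ω → ℝ) (f : Ω → A) (g : Ω → B) : ℝ :=
  ∑ ω : Ω, p ω * Real.logb 2
    ((∑ ω' : Ω, if f ω' = f ω ∧ g ω' = g ω then p ω' else 0) /
      ((∑ ω' : Ω, if f ω' = f ω then p ω' else 0) *
        (∑ ω' : Ω, if g ω' = g ω then p ω' else 0)))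

/-- Joint PMF of the input X and the independent transfer matrix H;
the channel output is Y = XH, i.e., `ω.1 * ω.2`. -/
def jointPMF {T M N : ℕ} (pX : Matrix (Fin T) (Fin M) F → ℝ)
    (pH : Matrix (Fin M) (Fin N) F → ℝ) :
    Matrix (Fin T) (Fin M) F × Matrix (Fin M) (Fin N) F → ℝ :=
  fun ω => pX ω.1 * pH ω.2

/-- I(X;Y) for the LOC with input PMF `pX` and transfer PMF `pH`. -/
def miXY {T M N : ℕ} (pX : Matrix (Fin T) (Fin M) F → ℝ)
    (pH : Matrix (Fin M) (Fin N) F → ℝ) : ℝ :=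
  mutualInfo (jointPMF pX pH) (fun ω => ω.1) (fun ω => ω.1 * ω.2)

/-- I(⟨X⟩;⟨Y⟩), mutual information between the column spaces. -/
def miColCol {T M N : ℕ} (pX : Matrix (Fin T) (Fin M) F → ℝ)
    (pH : Matrix (Fin M) (Fin N) F → ℝ) : ℝ :=
  mutualInfo (jointPMF pX pH) (fun ω => colSpace ω.1) (fun ω => colSpace (ω.1 * ω.2))

/-- I(⟨X^T⟩;⟨Y^T⟩), mutual information between the row spaces. -/
def miRowRow {T M N : ℕ} (pX : Matrix (Fin T) (Fin M) F → ℝ)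
    (pH : Matrix (Fin M) (Fin N) F → ℝ) : ℝ :=
  mutualInfo (jointPMF pX pH) (fun ω => rowSpace ω.1) (fun ω => rowSpace (ω.1 * ω.2))

/-- I(rank(X);rank(Y)). -/
def miRankRank {T M N : ℕ} (pX : Matrix (Fin T) (Fin M) F → ℝ)
    (pH : Matrix (Fin M) (Fin N) F → ℝ) : ℝ :=
  mutualInfo (jointPMF pX pH) (fun ω => ω.1.rank) (fun ω => (ω.1 * ω.2).rank)

/-- Pr{rank(X) = r}. -/
def prRankX {T M : ℕ} (pX : Matrix (Fin T) (Fin M) F → ℝ) (r : ℕ) : ℝ :=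
  ∑ x : Matrix (Fin T) (Fin M) F, if x.rank = r then pX x else 0

/-- Pr{rank(X) = r, rank(Y) = s} where Y = XH. -/
def prRankXY {T M N : ℕ} (pX : Matrix (Fin T) (Fin M) F → ℝ)
    (pH : Matrix (Fin M) (Fin N) F → ℝ) (r s : ℕ) : ℝ :=
  ∑ ω : Matrix (Fin T) (Fin M) F × Matrix (Fin M) (Fin N) F,
    if ω.1.rank = r ∧ (ω.1 * ω.2).rank = s then jointPMF pX pH ω else 0

/-- J(rank(X);rank(Y)) = ∑_{r,s} Pr{rank X = r, rank Y = s} · log₂(χ_T[s]/χ_r[s]). -/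
def Jrank (q : ℕ) {T M N : ℕ} (pX : Matrix (Fin T) (Fin M) F → ℝ)
    (pH : Matrix (Fin M) (Fin N) F → ℝ) : ℝ :=
  ∑ r ∈ Finset.range (T + 1), ∑ s ∈ Finset.range (T + 1),
    prRankXY pX pH r s * Real.logb 2 ((chi q T s : ℝ) / (chi q r s : ℝ))

/-- Row-space-symmetric LOC: the transition probability P(Y|X) for ⟨Y⟩ ⊆ ⟨X⟩
is determined by the row spaces of the input and output matrices. -/
def RowSpaceSymmetric (T : ℕ) {M N : ℕ} (pH : Matrix (Fin M) (Fin N) F → ℝ) : Prop :=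
  ∀ (X X' : Matrix (Fin T) (Fin M) F) (Y Y' : Matrix (Fin T) (Fin N) F),
    colSpace Y ≤ colSpace X → colSpace Y' ≤ colSpace X' →
    rowSpace X = rowSpace X' → rowSpace Y = rowSpace Y' →
    prXY pH X Y = prXY pH X' Y'

/-- Pr{⟨XH⟩ = V} for a fixed input matrix X. -/
def prColY (T : ℕ) {M N : ℕ} (pH : Matrix (Fin M) (Fin N) F → ℝ)
    (X : Matrix (Fin T) (Fin M) F) (V : Submodule F (Fin T → F)) : ℝ :=
  ∑ Hm : Matrix (Fin M) (Fin N) F, if colSpace (X * Hm) = V then pH Hm else 0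

/-- Unique subspace degradation: Pr{⟨XH⟩ = V} is the same for all inputs X
with the same column space. -/
def UniqueSubspaceDegradation (T : ℕ) {M N : ℕ}
    (pH : Matrix (Fin M) (Fin N) F → ℝ) : Prop :=
  ∀ (V : Submodule F (Fin T → F)) (X X' : Matrix (Fin T) (Fin M) F),
    colSpace X = colSpace X' → prColY T pH X V = prColY T pH X' V

/-- Rank-symmetric LOC: P(Y|X) = μ(rank X, rank Y) when ⟨Y⟩ ⊆ ⟨X⟩, and 0 otherwise. -/
def RankSymmetric (T : ℕ) {M N : ℕ} (pH : Matrix (Fin M) (Fin N) F → ℝ) : Prop :=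
  ∃ μ : ℕ → ℕ → ℝ, (∀ a b, 0 ≤ μ a b ∧ μ a b ≤ 1) ∧
    ∀ (X : Matrix (Fin T) (Fin M) F) (Y : Matrix (Fin T) (Fin N) F),
      prXY pH X Y = if colSpace Y ≤ colSpace X then μ X.rank Y.rank else 0

/-- rank*(H) = max{r : Pr{rank H = r} > 0}. -/
def rankStar {M N : ℕ} (pH : Matrix (Fin M) (Fin N) F → ℝ) : ℕ :=
  sSup {r : ℕ | 0 < ∑ Hm : Matrix (Fin M) (Fin N) F, if Hm.rank = r then pH Hm else 0}

/-- H is uniform given rank: p_H(𝐇) = Pr{rank H = rank 𝐇} / χ_{M,N}[rank 𝐇]. -/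
def UniformGivenRank {F : Type} [Field F] [Fintype F] (q : ℕ) {M N : ℕ}
    (pH : Matrix (Fin M) (Fin N) F → ℝ) : Prop :=
  ∀ Hm : Matrix (Fin M) (Fin N) F,
    pH Hm = (∑ H' : Matrix (Fin M) (Fin N) F, if H'.rank = Hm.rank then pH H' else 0)
      / ((chi q M Hm.rank : ℝ) * (chi q N Hm.rank : ℝ) / (chi q Hm.rank Hm.rank : ℝ))

/-!
Both properties say that `pH H` depends only on the rank of `H`. For uniformity given rank this
amounts to counting the matrices of rank `r`: pairing each such `H` with the bases of its column
space, written as the columns of a matrix `A` with `r` columns, gives `χ_M[r] χ_N[r]` pairs in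
which every `H` occurs `χ_r[r]` times.

If `M ≤ T`, some input `X` has linearly independent columns, so `Y = X H` determines `H` and has
its rank, and rank symmetry at `X` is the assertion about `pH`. Conversely, the pairs `(X, Y)` with
`⟨Y⟩ ⊆ ⟨X⟩` and prescribed ranks form a single orbit under `(X, Y) ↦ (P X Q, P Y R)` with `P`, `Q`,
`R` invertible. The factor `P` does not change the solutions `H` of `X H = Y`, and `Q`, `R` replace
them by `Q⁻¹ H R`, which has the same rank.
-/

section LinearMaps

variable {K V W : Type*} [DivisionRing K] [AddCommGroup V] [Module K V] [FiniteDimensional K V]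
  [AddCommGroup W] [Module K W]

lemma exists_linearEquiv_comp_eq_of_range_eq {f f' : V →ₗ[K] W}
    (h : LinearMap.range f = LinearMap.range f') :
    ∃ e : V ≃ₗ[K] V, f ∘ₗ e.toLinearMap = f' := by
  obtain ⟨C, hC⟩ := (LinearMap.ker f).exists_isCompl
  obtain ⟨C', hC'⟩ := (LinearMap.ker f').exists_isCompl
  have finrank_ker : finrank K (LinearMap.ker f') = finrank K (LinearMap.ker f) := by
    have rank_nullity := f.finrank_range_add_finrank_ker
    have rank_nullity' := f'.finrank_range_add_finrank_ker
    rw [h] at rank_nullity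
    omega
  let onCompl : C' ≃ₗ[K] C := f'.kerComplementEquivRange hC'.symm ≪≫ₗ
    LinearEquiv.ofEq _ _ h.symm ≪≫ₗ (f.kerComplementEquivRange hC.symm).symm
  have f_onCompl (c : C') : f (onCompl c) = f' c := by
    simpa [onCompl] using congrArg Subtype.val
      ((f.kerComplementEquivRange hC.symm).apply_symm_apply
        (LinearEquiv.ofEq _ _ h.symm (f'.kerComplementEquivRange hC'.symm c)))
  let split' := Submodule.prodEquivOfIsCompl C' (LinearMap.ker f') hC'.symm
  let split := Submodule.prodEquivOfIsCompl C (LinearMap.ker f) hC.symm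
  refine ⟨split'.symm ≪≫ₗ onCompl.prodCongr (LinearEquiv.ofFinrankEq _ _ finrank_ker) ≪≫ₗ split,
    LinearMap.ext fun v => ?_⟩
  obtain ⟨⟨c, k⟩, rfl⟩ := split'.surjective v
  simp [split, split', f_onCompl]

lemma exists_linearEquiv_map_eq {A A' : Submodule K V} (h : finrank K A = finrank K A') :
    ∃ e : V ≃ₗ[K] V, A.map e.toLinearMap = A' := by
  obtain ⟨e, he⟩ := Submodule.exists_linearEquiv_restrict_eq (LinearEquiv.ofFinrankEq A A' h)
  refine ⟨e, Submodule.eq_of_le_of_finrank_eq ?_ ((e.finrank_map_eq A).trans h)⟩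
  rintro _ ⟨x, hx, rfl⟩
  exact (he ⟨x, hx⟩).symm ▸ Subtype.coe_prop _

lemma exists_linearEquiv_map_eq_and_map_eq {A B A' B' : Submodule K V}
    (hAB : A ≤ B) (hAB' : A' ≤ B')
    (hA : finrank K A = finrank K A') (hB : finrank K B = finrank K B') :
    ∃ e : V ≃ₗ[K] V, A.map e.toLinearMap = A' ∧ B.map e.toLinearMap = B' := by
  obtain ⟨b, hb⟩ := exists_linearEquiv_map_eq hB
  have finrank_map : finrank K (A.map b.toLinearMap) = finrank K A' :=
    (b.finrank_map_eq A).trans hA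
  have map_le : A.map b.toLinearMap ≤ B' := hb ▸ Submodule.map_mono hAB
  obtain ⟨a, ha⟩ := exists_linearEquiv_map_eq
    (A := (A.map b.toLinearMap).comap B'.subtype) (A' := A'.comap B'.subtype) <| by
      rw [(Submodule.comapSubtypeEquivOfLe map_le).finrank_eq, finrank_map,
        (Submodule.comapSubtypeEquivOfLe hAB').finrank_eq]
  obtain ⟨e, he⟩ := Submodule.exists_linearEquiv_restrict_eq a
  have comp_subtype : e.toLinearMap ∘ₗ B'.subtype = B'.subtype ∘ₗ a.toLinearMap :=
    LinearMap.ext fun x => (he x).symm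
  have map_e {C C' : Submodule K V} (hC : C ≤ B') (hC' : C' ≤ B')
      (h : (C.comap B'.subtype).map a.toLinearMap = C'.comap B'.subtype) :
      C.map e.toLinearMap = C' := by
    rw [← inf_eq_right.2 hC, ← Submodule.map_comap_subtype, ← Submodule.map_comp, comp_subtype,
      Submodule.map_comp, h, Submodule.map_comap_subtype, inf_eq_right.2 hC']
  refine ⟨b ≪≫ₗ e, ?_, ?_⟩
  · rw [LinearEquiv.coe_trans, Submodule.map_comp, map_e map_le hAB' ha]
  · rw [LinearEquiv.coe_trans, Submodule.map_comp, hb, map_e le_rfl le_rfl (by simp)]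

end LinearMaps

section Matrices

variable {K l m n : Type*} [Field K] [Fintype m]

lemma mul_right_inj_of_mulVec_injective {A : Matrix l m K} (hA : Function.Injective A.mulVec)
    {B C : Matrix m n K} : A * B = A * C ↔ B = C :=
  ⟨fun h => Matrix.ext_col fun j => hA (congrArg (Matrix.col · j) h), fun h => h ▸ rfl⟩

variable [Fintype n]

lemma rank_eq_card_iff_mulVec_injective {A : Matrix l n K} :
    A.rank = Fintype.card n ↔ Function.Injective A.mulVec := by
  rw [Matrix.mulVec_injective_iff, linearIndependent_iff_card_eq_finrank_span, Set.finrank,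
    ← Matrix.rank_eq_finrank_span_cols, eq_comm]

lemma rank_mul_of_mulVec_injective {A : Matrix l m K} (hA : Function.Injective A.mulVec)
    (B : Matrix m n K) : (A * B).rank = B.rank := by
  rw [Matrix.rank, Matrix.mulVecLin_mul, LinearMap.range_comp]
  exact (Submodule.equivMapOfInjective A.mulVecLin hA _).finrank_eq.symm

lemma range_mulVecLin_le_iff_exists_mul_eq {A : Matrix l m K} {B : Matrix l n K} :
    LinearMap.range B.mulVecLin ≤ LinearMap.range A.mulVecLin ↔
      ∃ C : Matrix m n K, A * C = B := by
  constructor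
  · intro h
    have col_mem (j : n) : ∃ c, A *ᵥ c = B.col j :=
      h (B.range_mulVecLin ▸ Submodule.subset_span ⟨j, rfl⟩)
    choose c hc using col_mem
    exact ⟨(Matrix.of c)ᵀ, Matrix.ext_col hc⟩
  · rintro ⟨C, rfl⟩
    exact Matrix.mulVecLin_mul A C ▸ LinearMap.range_comp_le_range _ _

lemma isUnit_det_toMatrix' [DecidableEq n] (e : (n → K) ≃ₗ[K] (n → K)) :
    IsUnit (LinearMap.toMatrix' e.toLinearMap).det := by
  rw [LinearMap.det_toMatrix']
  exact e.isUnit_det'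

lemma exists_isUnit_det_mul_eq_of_range_eq [DecidableEq n] {X X' : Matrix l n K}
    (h : LinearMap.range X.mulVecLin = LinearMap.range X'.mulVecLin) :
    ∃ Q : Matrix n n K, IsUnit Q.det ∧ X * Q = X' := by
  obtain ⟨e, he⟩ := exists_linearEquiv_comp_eq_of_range_eq h
  refine ⟨_, isUnit_det_toMatrix' e, Matrix.ext_of_mulVec_single fun j => ?_⟩
  rw [← Matrix.mulVec_mulVec, LinearMap.toMatrix'_mulVec]
  exact LinearMap.congr_fun he _

lemma exists_isUnit_det_range_mul_eq [DecidableEq l] [Fintype l] {X X' : Matrix l m K}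
    {Y Y' : Matrix l n K}
    (h : LinearMap.range Y.mulVecLin ≤ LinearMap.range X.mulVecLin)
    (h' : LinearMap.range Y'.mulVecLin ≤ LinearMap.range X'.mulVecLin)
    (hX : X.rank = X'.rank) (hY : Y.rank = Y'.rank) :
    ∃ P : Matrix l l K, IsUnit P.det ∧
      LinearMap.range (P * X).mulVecLin = LinearMap.range X'.mulVecLin ∧
      LinearMap.range (P * Y).mulVecLin = LinearMap.range Y'.mulVecLin := by
  obtain ⟨e, hYe, hXe⟩ := exists_linearEquiv_map_eq_and_map_eq h h' hY hX
  refine ⟨_, isUnit_det_toMatrix' e, ?_, ?_⟩ <;>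
    rw [Matrix.mulVecLin_mul, LinearMap.range_comp, ← Matrix.toLin'_apply', Matrix.toLin'_toMatrix']
  exacts [hXe, hYe]

lemma exists_isUnit_det_mul_mul_eq [DecidableEq l] [Fintype l] [DecidableEq m] [DecidableEq n]
    {X X' : Matrix l m K} {Y Y' : Matrix l n K}
    (h : LinearMap.range Y.mulVecLin ≤ LinearMap.range X.mulVecLin)
    (h' : LinearMap.range Y'.mulVecLin ≤ LinearMap.range X'.mulVecLin)
    (hX : X.rank = X'.rank) (hY : Y.rank = Y'.rank) :
    ∃ (P : Matrix l l K) (Q : Matrix m m K) (R : Matrix n n K),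
      IsUnit P.det ∧ IsUnit Q.det ∧ IsUnit R.det ∧ P * X * Q = X' ∧ P * Y * R = Y' := by
  obtain ⟨P, hP, hPX, hPY⟩ := exists_isUnit_det_range_mul_eq h h' hX hY
  obtain ⟨Q, hQ, hQX⟩ := exists_isUnit_det_mul_eq_of_range_eq hPX
  obtain ⟨R, hR, hRY⟩ := exists_isUnit_det_mul_eq_of_range_eq hPY
  exact ⟨P, Q, R, hP, hQ, hR, hQX, hRY⟩

end Matrices

section Counting

variable {K m n : Type*} [Field K] [Fintype K] [Fintype m] [DecidableEq m] [Fintype n]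

lemma chi_card_pos {k r : ℕ} (h : r ≤ k) : 0 < chi (Fintype.card K) k r := by
  refine Finset.prod_pos fun i hi => Nat.sub_pos_of_lt ?_
  exact Nat.pow_lt_pow_right Fintype.one_lt_card ((Finset.mem_range.1 hi).trans_le h)

lemma card_rank_eq_width_and_range_le {r : ℕ} {W : Submodule K (m → K)} (h : r ≤ finrank K W) :
    #{A : Matrix m (Fin r) K | A.rank = r ∧ LinearMap.range A.mulVecLin ≤ W} =
      chi (Fintype.card K) (finrank K W) r := by
  have rank_eq_iff (A : Matrix m (Fin r) K) : A.rank = r ↔ LinearIndependent K A.col := by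
    rw [← Matrix.mulVec_injective_iff, ← rank_eq_card_iff_mulVec_injective, Fintype.card_fin]
  have range_le_iff (A : Matrix m (Fin r) K) :
      LinearMap.range A.mulVecLin ≤ W ↔ ∀ j, A.col j ∈ W := by
    rw [Matrix.range_mulVecLin, Submodule.span_le, Set.range_subset_iff]
    rfl
  rw [chi, Finset.prod_range, ← card_linearIndependent h, ← Fintype.card_subtype,
    ← Nat.card_eq_fintype_card]
  exact Nat.card_congr
    { toFun := fun A => ⟨fun j => ⟨A.1.col j, (range_le_iff _).1 A.2.2 j⟩,
        .of_comp W.subtype ((rank_eq_iff _).1 A.2.1)⟩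
      invFun := fun s => ⟨(Matrix.of fun j => (s.1 j : m → K))ᵀ,
        (rank_eq_iff _).2 (s.2.map' W.subtype W.ker_subtype),
        (range_le_iff _).2 fun j => (s.1 j).2⟩
      left_inv := fun _ => rfl
      right_inv := fun _ => rfl }

lemma card_rank_eq_width_and_range_eq {r : ℕ} {H : Matrix m n K} (hH : H.rank = r) :
    #{A : Matrix m (Fin r) K |
      A.rank = r ∧ LinearMap.range A.mulVecLin = LinearMap.range H.mulVecLin} =
      chi (Fintype.card K) r r := by
  subst hH
  refine Eq.trans ?_ (card_rank_eq_width_and_range_le (W := LinearMap.range H.mulVecLin) le_rfl)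
  congr 1 with A
  rw [Finset.mem_filter_univ, Finset.mem_filter_univ]
  exact and_congr_right fun hA => ⟨le_of_eq, fun h => Submodule.eq_of_le_of_finrank_eq h hA⟩

lemma card_rank_eq_width {r : ℕ} (h : r ≤ Fintype.card m) :
    #{A : Matrix m (Fin r) K | A.rank = r} = chi (Fintype.card K) (Fintype.card m) r := by
  simpa using card_rank_eq_width_and_range_le (K := K) (m := m) (W := ⊤) (by simpa using h)

variable [DecidableEq n]

lemma card_rank_eq_height {r : ℕ} (h : r ≤ Fintype.card n) :
    #{B : Matrix (Fin r) n K | B.rank = r} = chi (Fintype.card K) (Fintype.card n) r := by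
  rw [← card_rank_eq_width h]
  exact Finset.card_equiv (Matrix.transposeAddEquiv _ _ K).toEquiv fun B => by
    simp [Matrix.rank_transpose]

lemma card_range_eq_of_rank_eq_width {r : ℕ} (h : r ≤ Fintype.card n) {A : Matrix m (Fin r) K}
    (hA : A.rank = r) :
    #{H : Matrix m n K | LinearMap.range A.mulVecLin = LinearMap.range H.mulVecLin} =
      chi (Fintype.card K) (Fintype.card n) r := by
  have inj : Function.Injective A.mulVec :=
    rank_eq_card_iff_mulVec_injective.1 (hA.trans (Fintype.card_fin r).symm)
  have range_mul_eq_iff (B : Matrix (Fin r) n K) :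
      LinearMap.range A.mulVecLin = LinearMap.range (A * B).mulVecLin ↔ B.rank = r := by
    rw [← rank_mul_of_mulVec_injective inj B]
    have range_mul_le := range_mulVecLin_le_iff_exists_mul_eq.2 ⟨B, Eq.refl (A * B)⟩
    exact ⟨fun h => by rw [Matrix.rank, ← h]; exact hA,
      fun h => (Submodule.eq_of_le_of_finrank_eq range_mul_le (h.trans hA.symm)).symm⟩
  rw [← card_rank_eq_height h, eq_comm]
  refine Finset.card_nbij (fun B : Matrix (Fin r) n K => A * B) (fun B hB => ?_)
    (fun _ _ _ _ => (mul_right_inj_of_mulVec_injective inj).1) fun H hH => ?_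
  · rw [Finset.mem_coe, Finset.mem_filter_univ] at hB ⊢
    exact (range_mul_eq_iff B).2 hB
  · rw [Finset.mem_coe, Finset.mem_filter_univ] at hH
    obtain ⟨B, rfl⟩ := range_mulVecLin_le_iff_exists_mul_eq.1 hH.ge
    exact ⟨B, by rwa [Finset.mem_coe, Finset.mem_filter_univ, ← range_mul_eq_iff], rfl⟩

lemma card_rank_eq_mul_chi {r : ℕ} (hm : r ≤ Fintype.card m) (hn : r ≤ Fintype.card n) :
    #{H : Matrix m n K | H.rank = r} * chi (Fintype.card K) r r =
      chi (Fintype.card K) (Fintype.card m) r * chi (Fintype.card K) (Fintype.card n) r := by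
  rw [← card_rank_eq_width hm, eq_comm]
  refine Finset.card_mul_eq_card_mul
    (fun (A : Matrix m (Fin r) K) (H : Matrix m n K) =>
      LinearMap.range A.mulVecLin = LinearMap.range H.mulVecLin)
    (fun A hA => ?_) fun H hH => ?_
  · rw [Finset.mem_filter_univ] at hA
    rw [← card_range_eq_of_rank_eq_width hn hA, Finset.bipartiteAbove, Finset.filter_filter]
    congr 1 with H
    rw [Finset.mem_filter_univ, Finset.mem_filter_univ, and_iff_right_iff_imp]
    exact fun h => by rw [Matrix.rank, ← h]; exact hA
  · rw [Finset.mem_filter_univ] at hH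
    rw [← card_rank_eq_width_and_range_eq hH, Finset.bipartiteBelow, Finset.filter_filter]

end Counting

section Channel

variable {k M N : ℕ} {pH : Matrix (Fin M) (Fin N) F → ℝ}

lemma uniformGivenRank_iff_factorsThrough_rank :
    UniformGivenRank (Fintype.card F) pH ↔ pH.FactorsThrough Matrix.rank := by
  refine ⟨fun h H H' hr => by rw [h H, h H', hr], fun h H => ?_⟩
  have sum_eq : (∑ H' : Matrix (Fin M) (Fin N) F, if H'.rank = H.rank then pH H' else 0) =
      #{H' : Matrix (Fin M) (Fin N) F | H'.rank = H.rank} * pH H := by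
    rw [← Finset.sum_filter, ← nsmul_eq_mul]
    exact Finset.sum_eq_card_nsmul fun H' hH' => h (Finset.mem_filter.1 hH').2
  have hM := H.rank_le_height
  have hN := H.rank_le_width
  have chi_ne_zero {m : ℕ} (h : H.rank ≤ m) : (chi (Fintype.card F) m H.rank : ℝ) ≠ 0 :=
    Nat.cast_ne_zero.2 (chi_card_pos h).ne'
  have card_mul : (#{H' : Matrix (Fin M) (Fin N) F | H'.rank = H.rank} : ℝ) *
      chi (Fintype.card F) H.rank H.rank =
      chi (Fintype.card F) M H.rank * chi (Fintype.card F) N H.rank := by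
    have card_mul_nat := card_rank_eq_mul_chi (K := F) (m := Fin M) (n := Fin N) (r := H.rank)
      (by simpa using hM) (by simpa using hN)
    simp only [Fintype.card_fin] at card_mul_nat
    exact_mod_cast card_mul_nat
  rw [sum_eq, ← card_mul, mul_div_cancel_right₀ _ (chi_ne_zero le_rfl), mul_div_cancel_left₀]
  exact left_ne_zero_of_mul (card_mul ▸ mul_ne_zero (chi_ne_zero hM) (chi_ne_zero hN))

lemma prXY_mul_of_mulVec_injective {X : Matrix (Fin k) (Fin M) F}
    (hX : Function.Injective X.mulVec) (H : Matrix (Fin M) (Fin N) F) :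
    prXY pH X (X * H) = pH H := by
  simp [prXY, mul_right_inj_of_mulVec_injective hX]

lemma RankSymmetric.factorsThrough_rank (hM : M ≤ k) (h : RankSymmetric k pH) :
    pH.FactorsThrough Matrix.rank := by
  obtain ⟨μ, -, hμ⟩ := h
  let X : Matrix (Fin k) (Fin M) F := (1 : Matrix (Fin k) (Fin k) F).submatrix id (Fin.castLE hM)
  have hX : Function.Injective X.mulVec := by
    have one_col : LinearIndependent F (1 : Matrix (Fin k) (Fin k) F).col :=
      Matrix.mulVec_injective_iff.1 (Matrix.mulVec_injective_of_isUnit isUnit_one)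
    exact Matrix.mulVec_injective_iff.2 (one_col.comp _ (Fin.castLE_injective hM))
  have pH_eq (H : Matrix (Fin M) (Fin N) F) : pH H = μ X.rank H.rank := by
    have output_le : colSpace (X * H) ≤ colSpace X :=
      range_mulVecLin_le_iff_exists_mul_eq.2 ⟨H, rfl⟩
    rw [← prXY_mul_of_mulVec_injective (pH := pH) hX H, hμ, if_pos output_le,
      rank_mul_of_mulVec_injective hX]
  intro H H' hr
  rw [pH_eq, pH_eq, hr]

lemma prXY_mem_Icc (hpH : IsPMF pH) (X : Matrix (Fin k) (Fin M) F) (Y : Matrix (Fin k) (Fin N) F) :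
    prXY pH X Y ∈ Set.Icc 0 1 := by
  rw [prXY, ← Finset.sum_filter, ← hpH.2]
  exact ⟨Finset.sum_nonneg fun H _ => hpH.1 H,
    Finset.sum_le_univ_sum_of_nonneg hpH.1⟩

lemma prXY_eq_zero {X : Matrix (Fin k) (Fin M) F} {Y : Matrix (Fin k) (Fin N) F}
    (h : ¬ colSpace Y ≤ colSpace X) : prXY pH X Y = 0 :=
  Finset.sum_eq_zero fun H _ => if_neg fun hH => h (range_mulVecLin_le_iff_exists_mul_eq.2 ⟨H, hH⟩)

lemma prXY_mul_left {l : ℕ} {P : Matrix (Fin l) (Fin k) F} (hP : Function.Injective P.mulVec)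
    (X : Matrix (Fin k) (Fin M) F) (Y : Matrix (Fin k) (Fin N) F) :
    prXY pH (P * X) (P * Y) = prXY pH X Y := by
  simp only [prXY, Matrix.mul_assoc, mul_right_inj_of_mulVec_injective hP]

lemma prXY_mul_right (hpH : pH.FactorsThrough Matrix.rank) {Q : Matrix (Fin M) (Fin M) F}
    {R : Matrix (Fin N) (Fin N) F} (hQ : IsUnit Q.det) (hR : IsUnit R.det)
    (X : Matrix (Fin k) (Fin M) F) (Y : Matrix (Fin k) (Fin N) F) :
    prXY pH (X * Q) (Y * R) = prXY pH X Y := by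
  let e : Matrix (Fin M) (Fin N) F ≃ Matrix (Fin M) (Fin N) F :=
    { toFun := fun H => Q * H * R⁻¹
      invFun := fun H => Q⁻¹ * H * R
      left_inv := fun H => by
        simp only [Matrix.mul_assoc, Matrix.nonsing_inv_mul_cancel_left _ _ hQ,
          Matrix.nonsing_inv_mul _ hR, Matrix.mul_one]
      right_inv := fun H => by
        simp only [Matrix.mul_assoc, Matrix.mul_nonsing_inv_cancel_left _ _ hQ,
          Matrix.mul_nonsing_inv _ hR, Matrix.mul_one] }
  refine Fintype.sum_equiv e _ _ fun H => ?_
  have output_iff : X * Q * H = Y * R ↔ X * e H = Y := by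
    rw [show X * e H = X * Q * H * R⁻¹ by simp only [e, Equiv.coe_fn_mk, Matrix.mul_assoc]]
    exact ⟨fun h => by rw [h, Matrix.mul_nonsing_inv_cancel_right _ _ hR],
      fun h => by rw [← h, Matrix.nonsing_inv_mul_cancel_right _ _ hR]⟩
  have rank_e : H.rank = (e H).rank := by
    rw [Equiv.coe_fn_mk, Matrix.rank_mul_eq_left_of_isUnit_det _ _ (by simpa using hR),
      Matrix.rank_mul_eq_right_of_isUnit_det _ _ hQ]
  simp only [output_iff, hpH rank_e]

lemma prXY_eq_of_rank_eq (hpH : pH.FactorsThrough Matrix.rank) {X X' : Matrix (Fin k) (Fin M) F}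
    {Y Y' : Matrix (Fin k) (Fin N) F} (h : colSpace Y ≤ colSpace X)
    (h' : colSpace Y' ≤ colSpace X') (hX : X.rank = X'.rank) (hY : Y.rank = Y'.rank) :
    prXY pH X Y = prXY pH X' Y' := by
  obtain ⟨P, Q, R, hP, hQ, hR, rfl, rfl⟩ := exists_isUnit_det_mul_mul_eq h h' hX hY
  rw [prXY_mul_right hpH hQ hR, prXY_mul_left (Matrix.mulVec_injective_of_isUnit <|
    (Matrix.isUnit_iff_isUnit_det P).2 hP)]

lemma rankSymmetric_of_factorsThrough_rank (hpmf : IsPMF pH)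
    (hpH : pH.FactorsThrough Matrix.rank) (k : ℕ) : RankSymmetric k pH := by
  let Compatible := {p : Matrix (Fin k) (Fin M) F × Matrix (Fin k) (Fin N) F //
    colSpace p.2 ≤ colSpace p.1}
  let ranks (p : Compatible) : ℕ × ℕ := (p.1.1.rank, p.1.2.rank)
  let pr (p : Compatible) : ℝ := prXY pH p.1.1 p.1.2
  have pr_factorsThrough : pr.FactorsThrough ranks := fun p p' h =>
    prXY_eq_of_rank_eq hpH p.2 p'.2 (congrArg Prod.fst h) (congrArg Prod.snd h)
  refine ⟨fun a b => Function.extend ranks pr 0 (a, b), fun a b => ?_, fun X Y => ?_⟩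
  · by_cases h : ∃ p, ranks p = (a, b)
    · obtain ⟨p, ranks_eq⟩ := h
      change Function.extend ranks pr 0 (a, b) ∈ Set.Icc 0 1
      rw [← ranks_eq, pr_factorsThrough.extend_apply]
      exact prXY_mem_Icc hpmf _ _
    · simp [Function.extend_apply' _ _ _ h]
  · split_ifs with h
    · exact (pr_factorsThrough.extend_apply 0 ⟨(X, Y), h⟩).symm
    · exact prXY_eq_zero h

end Channel

/-- (i) if T ≥ M and LOC(H,T) is rank symmetric then H is uniform
given rank; (ii) if H is uniform given rank then LOC(H,T') is rank symmetric for
every positive integer T'. -/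
theorem rank_symmetric_and_uniform_given_rank
    {F : Type} [Field F] [Fintype F] (q T M N : ℕ) (hq : Fintype.card F = q)
    (pH : Matrix (Fin M) (Fin N) F → ℝ) (hpH : IsPMF pH) :
    (M ≤ T → RankSymmetric T pH → UniformGivenRank q pH)
    ∧ (UniformGivenRank q pH → ∀ T' : ℕ, 0 < T' → RankSymmetric T' pH) := by
  subst hq
  refine ⟨fun hM h => ?_, fun h T' _ => ?_⟩
  · exact uniformGivenRank_iff_factorsThrough_rank.2 (h.factorsThrough_rank hM)
  · exact rankSymmetric_of_factorsThrough_rank hpH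
      (uniformGivenRank_iff_factorsThrough_rank.1 h) T'

end
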